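/- arXiv:2402.15167 — 3 statements merged into one kernel-verified Lean document; each statement's English description precedes it below -/
import Mathlib

section
/- Fix integers N ≥ 2, d ≥ 1 and let K be any integer with K ≥ dN + 1. There exist vectors y_1, …, y_K ∈ ℝ^d such that the intersection of the zero sets of the functions f̃_{y_1}, …, f̃_{y_K} equals exactly the intrinsic zero set Ω; that is, ⋂_{k=1}^{K} {X ∈ (ℝ^d)^N : f̃_{y_k}(X) = 0} = Ω. -/
/-! For generic `y = (y_1, …, y_K)` the two sets agree; this is a dimension count. If `X ∉ Ω` is a
common zero, then each `y_k` is orthogonal to some nonzero `v_k = X_{i_k} − X_{j_k}`, say with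
nonzero coordinate `l_k`. For fixed indices `(i_k, j_k, l_k)`, all such `y` lie in the range of a
polynomial map `orthParam` in `X` and `d − 1` free parameters for each `k`. Its source has dimension
`dN + K(d − 1) < Kd`, so its range has Hausdorff dimension less than `Kd`. As there are finitely
many choices of indices, the union of these ranges has dense complement (`exists_generic`), and any
`y` in this complement works. -/

open Finset in
/-- `f̃_y(X) = ∏_{i<j} yᵀ(X_i − X_j)`. -/
noncomputable def ftilde (N d : ℕ) (y : Fin d → ℝ) (X : Fin N → Fin d → ℝ) : ℝ :=
  ∏ i : Fin N, ∏ j ∈ Finset.Ioi i, (∑ l : Fin d, y l * (X i l - X j l))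

/-- The intrinsic zero set `Ω`. -/
def intrinsicZero (N d : ℕ) : Set (Fin N → Fin d → ℝ) :=
  {X | ∃ i j : Fin N, i ≠ j ∧ X i = X j}

/-- Parametrizes tuples `y` with `y_k` orthogonal to `v_k = X_{i_k} − X_{j_k}` in `ℝ^(m+1)`: given
`w_k ∈ ℝ^m`, the coordinates of `y_k` other than `l_k` are `(v_k)_{l_k} • w_k`, and coordinate `l_k`
is then determined by orthogonality. Scaling `w_k` by `(v_k)_{l_k}` avoids division, so the map is
polynomial. -/
noncomputable def orthParam {N m K : ℕ} (i j : Fin K → Fin N) (l : Fin K → Fin (m + 1))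
    (p : (Fin N → Fin (m + 1) → ℝ) × (Fin K → Fin m → ℝ)) : Fin K → Fin (m + 1) → ℝ :=
  fun k => (l k).insertNth
    (-∑ a, p.2 k a * (p.1 (i k) ((l k).succAbove a) - p.1 (j k) ((l k).succAbove a)))
    (fun a => (p.1 (i k) (l k) - p.1 (j k) (l k)) * p.2 k a)

lemma contDiff_orthParam {N m K : ℕ} (i j : Fin K → Fin N) (l : Fin K → Fin (m + 1)) :
    ContDiff ℝ 1 (orthParam i j l) := by
  rw [contDiff_pi]
  intro k
  rw [contDiff_pi]
  intro c
  rcases Fin.eq_self_or_eq_succAbove (l k) c with rfl | ⟨a, rfl⟩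
  · simp only [orthParam, Fin.insertNth_apply_same]
    fun_prop
  · simp only [orthParam, Fin.insertNth_apply_succAbove]
    fun_prop

lemma mem_range_orthParam {N m K : ℕ} (i j : Fin K → Fin N) (l : Fin K → Fin (m + 1))
    (y : Fin K → Fin (m + 1) → ℝ) (X : Fin N → Fin (m + 1) → ℝ)
    (hl : ∀ k, X (i k) (l k) - X (j k) (l k) ≠ 0)
    (h : ∀ k, ∑ c, y k c * (X (i k) c - X (j k) c) = 0) :
    y ∈ Set.range (orthParam i j l) := by
  refine ⟨(X, fun k a => y k ((l k).succAbove a) / (X (i k) (l k) - X (j k) (l k))), ?_⟩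
  funext k c
  have hk := h k
  have hlk := hl k
  rw [Fin.sum_univ_succAbove _ (l k)] at hk
  rcases Fin.eq_self_or_eq_succAbove (l k) c with rfl | ⟨a, rfl⟩
  · simp only [orthParam, Fin.insertNth_apply_same]
    simp_rw [div_mul_eq_mul_div]
    rw [← Finset.sum_div, ← neg_div, div_eq_iff hlk]
    linarith
  · simp only [orthParam, Fin.insertNth_apply_succAbove]
    field_simp

/-- Some `y` avoids the ranges of all the maps `orthParam`. -/
lemma exists_generic {N m K : ℕ} (hK : (m + 1) * N + 1 ≤ K) :
    ∃ y : Fin K → Fin (m + 1) → ℝ, ∀ i j l, y ∉ Set.range (orthParam (N := N) i j l) := by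
  let ι := (Fin K → Fin N) × (Fin K → Fin N) × (Fin K → Fin (m + 1))
  have hlt : dimH (⋃ q : ι, Set.range (orthParam q.1 q.2.1 q.2.2)) <
      Module.finrank ℝ (Fin K → Fin (m + 1) → ℝ) := by
    rw [dimH_iUnion]
    refine lt_of_le_of_lt
      (iSup_le fun q => (contDiff_orthParam q.1 q.2.1 q.2.2).dimH_range_le) ?_
    simp only [Module.finrank_prod, Module.finrank_pi_fintype, Module.finrank_self,
      Finset.sum_const, Finset.card_univ, Fintype.card_fin, smul_eq_mul, mul_one]
    norm_cast
    nlinarith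
  obtain ⟨y, hy⟩ := (dense_compl_of_dimH_lt_finrank hlt).nonempty
  exact ⟨y, fun i j l h => hy (Set.mem_iUnion.2 ⟨(i, j, l), h⟩)⟩

theorem stmt_0 (N d K : ℕ) (hN : 2 ≤ N) (hd : 1 ≤ d) (hK : d * N + 1 ≤ K) :
    ∃ y : Fin K → Fin d → ℝ,
      (⋂ k : Fin K, {X : Fin N → Fin d → ℝ | ftilde N d (y k) X = 0})
        = intrinsicZero N d := by
  obtain ⟨m, rfl⟩ : ∃ m, d = m + 1 := ⟨d - 1, by omega⟩
  obtain ⟨y, hy⟩ := exists_generic hK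
  refine ⟨y, Set.Subset.antisymm ?_ ?_⟩
  · intro X hX
    by_contra hΩ
    have key : ∀ k, ∃ i j : Fin N, ∃ l, X i l - X j l ≠ 0 ∧
        ∑ c, y k c * (X i c - X j c) = 0 := by
      intro k
      have hk : ftilde N (m + 1) (y k) X = 0 := Set.mem_iInter.1 hX k
      obtain ⟨i, -, hi⟩ := Finset.prod_eq_zero_iff.1 hk
      obtain ⟨j, hj, hij⟩ := Finset.prod_eq_zero_iff.1 hi
      have hne : X i ≠ X j := fun h => hΩ ⟨i, j, (Finset.mem_Ioi.1 hj).ne, h⟩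
      obtain ⟨l, hl⟩ := Function.ne_iff.1 hne
      exact ⟨i, j, l, sub_ne_zero.2 hl, hij⟩
    choose i j l hl h using key
    exact hy i j l (mem_range_orthParam i j l y X hl h)
  · rintro X ⟨i, j, hij, hX⟩
    refine Set.mem_iInter.2 fun k => ?_
    wlog hlt : i < j generalizing i j
    · exact this j i hij.symm hX.symm (lt_of_le_of_ne (not_lt.1 hlt) hij.symm)
    refine Finset.prod_eq_zero (Finset.mem_univ i)
      (Finset.prod_eq_zero (Finset.mem_Ioi.2 hlt) ?_)
    simp [hX]
end

section
/- Fix integers N ≥ 2, d ≥ 1 and let K = dN + 1. There exist K functions f_1, …, f_K : (ℝ^d)^N → ℝ, each anti-symmetric, vanishing on Ω, and bounded in absolute value by 1, such that for every anti-symmetric continuous function Ψ : (ℝ^d)^N → ℝ there exist continuous symmetric functions g_1, …, g_K : (ℝ^d)^N → ℝ with Ψ(X) = ∑_{k=1}^{K} f_k(X)·g_k(X) for all X ∈ (ℝ^d)^N. -/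
/-- `Ψ` is anti-symmetric. -/
def IsAntisym (N d : ℕ) (Ψ : (Fin N → Fin d → ℝ) → ℝ) : Prop :=
  ∀ (π : Equiv.Perm (Fin N)) (X : Fin N → Fin d → ℝ),
    Ψ (fun i => X (π i)) = ((Equiv.Perm.sign π : ℤ) : ℝ) * Ψ X

/-- `Ψ` is symmetric. -/
def IsSym (N d : ℕ) (Ψ : (Fin N → Fin d → ℝ) → ℝ) : Prop :=
  ∀ (π : Equiv.Perm (Fin N)) (X : Fin N → Fin d → ℝ),
    Ψ (fun i => X (π i)) = Ψ X

/-- The Vandermonde determinant of the projections of the points `X_i` onto the direction `u`. -/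
noncomputable def projVandermonde {N d : ℕ} (u : Fin d → ℝ) (X : Fin N → Fin d → ℝ) : ℝ :=
  (Matrix.vandermonde fun i => u ⬝ᵥ X i).det

lemma projVandermonde_eq_zero_iff {N d : ℕ} (u : Fin d → ℝ) (X : Fin N → Fin d → ℝ) :
    projVandermonde u X = 0 ↔ ∃ i j : Fin N, i ≠ j ∧ u ⬝ᵥ X i = u ⬝ᵥ X j := by
  unfold projVandermonde
  rw [Matrix.det_vandermonde_eq_zero_iff]
  exact ⟨fun ⟨i, j, h, hij⟩ => ⟨i, j, hij, h⟩, fun ⟨i, j, hij, h⟩ => ⟨i, j, h, hij⟩⟩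

lemma isAntisym_projVandermonde {N d : ℕ} (u : Fin d → ℝ) :
    IsAntisym N d (projVandermonde u) := by
  intro π X
  exact Matrix.det_permute π (Matrix.vandermonde fun i => u ⬝ᵥ X i)

lemma continuous_projVandermonde {N d : ℕ} (u : Fin d → ℝ) :
    Continuous (projVandermonde u : (Fin N → Fin d → ℝ) → ℝ) := by
  unfold projVandermonde
  simp only [Matrix.det_vandermonde, dotProduct]
  fun_prop

lemma projVandermonde_eq_zero_of_mem {N d : ℕ} (u : Fin d → ℝ) {X : Fin N → Fin d → ℝ}
    (hX : X ∈ intrinsicZero N d) : projVandermonde u X = 0 := by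
  obtain ⟨i, j, hij, h⟩ := hX
  exact (projVandermonde_eq_zero_iff u X).2 ⟨i, j, hij, by rw [h]⟩

/-- The linear subspace `{X : u · X_i = u · X_j}`. -/
def collisionSubspace {N d : ℕ} (u : Fin d → ℝ) (i j : Fin N) :
    Submodule ℝ (Fin N → Fin d → ℝ) where
  carrier := {X | u ⬝ᵥ X i = u ⬝ᵥ X j}
  zero_mem' := by simp
  add_mem' := by
    intro X Y hX hY
    simp only [Set.mem_ofPred_eq, Pi.add_apply, dotProduct_add] at *
    rw [hX, hY]
  smul_mem' := by
    intro c X hX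
    simp only [Set.mem_ofPred_eq, Pi.smul_apply, dotProduct_smul] at *
    rw [hX]

lemma mem_collisionSubspace {N d : ℕ} {u : Fin d → ℝ} {i j : Fin N} {X : Fin N → Fin d → ℝ} :
    X ∈ collisionSubspace u i j ↔ u ⬝ᵥ X i = u ⬝ᵥ X j := Iff.rfl

/-- The real vector space `ℝ^d` is not a finite union of hyperplanes. -/
lemma exists_dotProduct_ne_zero {d : ℕ} (T : Finset (Fin d → ℝ)) (hT : ∀ y ∈ T, y ≠ 0) :
    ∃ u : Fin d → ℝ, ∀ y ∈ T, u ⬝ᵥ y ≠ 0 := by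
  obtain ⟨φ, hφ⟩ := Module.exists_dual_forall_apply_ne_zero (K := ℝ)
    (fun y : T => (y : Fin d → ℝ)) fun y => hT y y.2
  refine ⟨(dotProductEquiv ℝ (Fin d)).symm φ, fun y hy => ?_⟩
  have h : dotProductEquiv ℝ (Fin d) ((dotProductEquiv ℝ (Fin d)).symm φ) y = φ y := by
    rw [LinearEquiv.apply_symm_apply]
  rw [dotProductEquiv_apply_apply] at h
  rw [h]
  exact hφ ⟨y, hy⟩

/-- One direction `u` cuts every subspace of a finite family down properly, for every pair `i, j`
that does not already collide on the whole subspace. -/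
lemma exists_direction {N d : ℕ} (S : Finset (Submodule ℝ (Fin N → Fin d → ℝ))) :
    ∃ u : Fin d → ℝ, ∀ L ∈ S, ∀ i j : Fin N, (∃ X ∈ L, X i ≠ X j) →
      ¬ L ≤ collisionSubspace u i j := by
  classical
  -- `W (L, i, j)` is a point of `L` with `X_i ≠ X_j` if there is one, and arbitrary otherwise;
  -- `u` only has to avoid the hyperplanes orthogonal to the nonzero differences `X_i - X_j`
  have key : ∀ p : Submodule ℝ (Fin N → Fin d → ℝ) × Fin N × Fin N, ∃ X : Fin N → Fin d → ℝ,
      (∃ X ∈ p.1, X p.2.1 ≠ X p.2.2) → X ∈ p.1 ∧ X p.2.1 ≠ X p.2.2 := by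
    intro p
    by_cases h : ∃ X ∈ p.1, X p.2.1 ≠ X p.2.2
    · obtain ⟨X, hX⟩ := h
      exact ⟨X, fun _ => hX⟩
    · exact ⟨0, fun h' => absurd h' h⟩
  choose W hW using key
  obtain ⟨u, hu⟩ := exists_dotProduct_ne_zero
    (((S ×ˢ (Finset.univ : Finset (Fin N × Fin N))).image
      fun p => W p p.2.1 - W p p.2.2).filter (· ≠ 0)) (by simp)
  refine ⟨u, fun L hL i j hX hle => ?_⟩
  obtain ⟨h1, h2⟩ := hW (L, i, j) hX
  refine hu (W (L, i, j) i - W (L, i, j) j) ?_ ?_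
  · rw [Finset.mem_filter, Finset.mem_image]
    exact ⟨⟨(L, i, j), by simp [hL], rfl⟩, sub_ne_zero.2 h2⟩
  · rw [dotProduct_sub, sub_eq_zero]
    exact mem_collisionSubspace.1 (hle h1)

/-- If each subspace of a finite family lies in `Ω` or has dimension less than `n`, then `n`
directions suffice to have no common zero outside `Ω` on the union of the family. -/
lemma exists_directions_aux {N d : ℕ} (n : ℕ) :
    ∀ S : Finset (Submodule ℝ (Fin N → Fin d → ℝ)),
      (∀ L ∈ S, (∀ X ∈ L, X ∈ intrinsicZero N d) ∨ Module.finrank ℝ L < n) →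
      ∃ u : Fin n → Fin d → ℝ, ∀ L ∈ S, ∀ X ∈ L,
        (∀ k, projVandermonde (u k) X = 0) → X ∈ intrinsicZero N d := by
  classical
  induction n with
  | zero =>
    intro S hS
    refine ⟨0, fun L hL X hX _ => ?_⟩
    rcases hS L hL with h | h
    · exact h X hX
    · exact absurd h (Nat.not_lt_zero _)
  | succ n ih =>
    intro S hS
    obtain ⟨u₀, hu₀⟩ := exists_direction S
    obtain ⟨u, hu⟩ := ih
      (((S ×ˢ (Finset.univ : Finset (Fin N × Fin N))).filter fun p => p.2.1 ≠ p.2.2).image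
        fun p => p.1 ⊓ collisionSubspace u₀ p.2.1 p.2.2) (by
      intro L' hL'
      obtain ⟨⟨L, i, j⟩, hp, rfl⟩ := Finset.mem_image.1 hL'
      simp only [Finset.mem_filter, Finset.mem_product, Finset.mem_univ, and_true] at hp
      obtain ⟨hL, hij⟩ := hp
      by_cases hX : ∃ X ∈ L, X i ≠ X j
      · rcases hS L hL with h | h
        · exact Or.inl fun X hX => h X hX.1
        · right
          have hlt : L ⊓ collisionSubspace u₀ i j < L :=
            inf_lt_left.2 (hu₀ L hL i j hX)
          have := Submodule.finrank_lt_finrank_of_lt hlt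
          simp only
          omega
      · left
        push Not at hX
        exact fun X hXL => ⟨i, j, hij, hX X hXL.1⟩)
    refine ⟨Fin.cons u₀ u, fun L hL X hX hz => ?_⟩
    obtain ⟨i, j, hij, h⟩ := (projVandermonde_eq_zero_iff u₀ X).1 (hz 0)
    refine hu (L ⊓ collisionSubspace u₀ i j) ?_ X ⟨hX, h⟩ fun k => by simpa using hz k.succ
    exact Finset.mem_image.2 ⟨(L, i, j), by simp [hL, hij], rfl⟩

/-- The functions `V (u k)`, for `dN + 1` suitable directions, have no common zero outside `Ω`. -/
lemma exists_directions (N d : ℕ) :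
    ∃ u : Fin (d * N + 1) → Fin d → ℝ, ∀ X : Fin N → Fin d → ℝ,
      (∀ k, projVandermonde (u k) X = 0) → X ∈ intrinsicZero N d := by
  obtain ⟨u, hu⟩ := exists_directions_aux (N := N) (d := d) (d * N + 1) {⊤} (by
    intro L hL
    right
    rw [Finset.mem_singleton.1 hL, finrank_top]
    simp [Module.finrank_pi_fintype, mul_comm])
  exact ⟨u, fun X => hu ⊤ (by simp) X trivial⟩

lemma IsAntisym.eq_zero_of_mem {N d : ℕ} {Ψ : (Fin N → Fin d → ℝ) → ℝ} (h : IsAntisym N d Ψ)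
    {X : Fin N → Fin d → ℝ} (hX : X ∈ intrinsicZero N d) : Ψ X = 0 := by
  obtain ⟨i, j, hij, hXij⟩ := hX
  have h1 := h (Equiv.swap i j) X
  have h2 : (fun l => X (Equiv.swap i j l)) = X := by
    funext l
    rcases eq_or_ne l i with rfl | hi
    · rw [Equiv.swap_apply_left, hXij]
    rcases eq_or_ne l j with rfl | hj
    · rw [Equiv.swap_apply_right, hXij]
    rw [Equiv.swap_apply_of_ne_of_ne hi hj]
  rw [h2, Equiv.Perm.sign_swap hij] at h1
  push_cast at h1
  linarith

lemma sign_mul_sign {N : ℕ} (π : Equiv.Perm (Fin N)) :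
    ((Equiv.Perm.sign π : ℤ) : ℝ) * ((Equiv.Perm.sign π : ℤ) : ℝ) = 1 := by
  rcases Int.units_eq_one_or (Equiv.Perm.sign π) with h | h <;> simp [h]

theorem stmt_3 (N d : ℕ) (hN : 2 ≤ N) (hd : 1 ≤ d) (K : ℕ) (hK : K = d * N + 1) :
    ∃ f : Fin K → (Fin N → Fin d → ℝ) → ℝ,
      (∀ k, IsAntisym N d (f k)) ∧
      (∀ k, ∀ X ∈ intrinsicZero N d, f k X = 0) ∧
      (∀ k X, |f k X| ≤ 1) ∧
      ∀ Ψ : (Fin N → Fin d → ℝ) → ℝ, Continuous Ψ → IsAntisym N d Ψ →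
        ∃ g : Fin K → (Fin N → Fin d → ℝ) → ℝ,
          (∀ k, Continuous (g k)) ∧ (∀ k, IsSym N d (g k)) ∧
          ∀ X, Ψ X = ∑ k : Fin K, f k X * g k X := by
  subst hK
  obtain ⟨u, hu⟩ := exists_directions N d
  let D : (Fin N → Fin d → ℝ) → ℝ := fun X => ∑ k, projVandermonde (u k) X ^ 2
  let f : Fin (d * N + 1) → (Fin N → Fin d → ℝ) → ℝ :=
    fun k X => projVandermonde (u k) X / √(D X)
  have hDc : Continuous D :=
    continuous_finsetSum _ fun k _ => (continuous_projVandermonde (u k)).pow 2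
  have hD0 : ∀ X, 0 ≤ D X := fun X => Finset.sum_nonneg fun k _ => sq_nonneg _
  have hDpos : ∀ X, X ∉ intrinsicZero N d → 0 < D X := by
    intro X hX
    refine (hD0 X).lt_of_ne' fun h => hX (hu X fun k => ?_)
    have := (Finset.sum_eq_zero_iff_of_nonneg fun k _ => sq_nonneg _).1 h k (Finset.mem_univ k)
    exact pow_eq_zero_iff two_ne_zero |>.1 this
  have hDsym : IsSym N d D := by
    intro π X
    refine Finset.sum_congr rfl fun k _ => ?_
    rw [isAntisym_projVandermonde (u k) π X, mul_pow, pow_two, sign_mul_sign, one_mul]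
  have hanti : ∀ k, IsAntisym N d (f k) := by
    intro k π X
    simp only [f]
    rw [isAntisym_projVandermonde (u k) π X, hDsym π X, mul_div_assoc]
  have hbound : ∀ k X, |f k X| ≤ 1 := by
    intro k X
    simp only [f]
    rw [abs_div, abs_of_nonneg (Real.sqrt_nonneg _)]
    refine div_le_one_of_le₀ (Real.abs_le_sqrt ?_) (Real.sqrt_nonneg _)
    exact Finset.single_le_sum (f := fun k => projVandermonde (u k) X ^ 2)
      (fun k _ => sq_nonneg _) (Finset.mem_univ k)
  refine ⟨f, hanti, fun k X hX => ?_, hbound, fun Ψ hΨ hΨa => ?_⟩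
  · simp only [f]
    rw [projVandermonde_eq_zero_of_mem _ hX, zero_div]
  refine ⟨fun k X => f k X * Ψ X, fun k => ?_, fun k π X => ?_, fun X => ?_⟩
  · rw [continuous_iff_continuousAt]
    intro X
    by_cases hX : X ∈ intrinsicZero N d
    · have hX0 := hΨa.eq_zero_of_mem hX
      have hlim : Filter.Tendsto (fun Y => |Ψ Y|) (nhds X) (nhds 0) := by
        simpa [hX0] using hΨ.abs.tendsto X
      unfold ContinuousAt
      beta_reduce
      rw [hX0, mul_zero]
      refine squeeze_zero_norm (fun Y => ?_) hlim
      rw [Real.norm_eq_abs, abs_mul]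
      exact mul_le_of_le_one_left (abs_nonneg _) (hbound k Y)
    · refine ContinuousAt.mul (ContinuousAt.div ?_ ?_ ?_) hΨ.continuousAt
      · exact (continuous_projVandermonde (u k)).continuousAt
      · exact (Real.continuous_sqrt.comp hDc).continuousAt
      · exact (Real.sqrt_pos.2 (hDpos X hX)).ne'
  · simp only
    rw [hanti k π X, hΨa π X, mul_mul_mul_comm, sign_mul_sign, one_mul]
  · by_cases hX : X ∈ intrinsicZero N d
    · simp [hΨa.eq_zero_of_mem hX]
    · have hsum : ∑ k, f k X * f k X = 1 := by
        simp only [f, ← pow_two, div_pow, Real.sq_sqrt (hD0 X)]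
        rw [← Finset.sum_div]
        exact div_self (hDpos X hX).ne'
      simp only [← mul_assoc]
      rw [← Finset.sum_mul, hsum, one_mul]
end

section
/- Fix integers N ≥ 2, d ≥ 1 and let K = dN + 1. For every anti-symmetric continuous function Ψ : (ℝ^d)^N → ℝ there exist, for each k ∈ {1, …, K} and each i ∈ {1, …, N}, functions h^k_i : (ℝ^d)^N × {1, …, N} → ℝ such that: (a) for each fixed j, the map X ↦ h^k_i(X, j) is continuous; (b) for every permutation π of {1, …, N} with π(j) = j, h^k_i((X_{π(1)}, …, X_{π(N)}), j) = h^k_i((X_1, …, X_N), j) (i.e., each entry is a symmetric function of the coordinates X_l with l ≠ j); and (c) Ψ(X) = ∑_{k=1}^{K} det M^k(X), where M^k(X) is the N×N matrix with (j, i)-entry h^k_i(X, j). -/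
open Finset

noncomputable section

/-! ### Order patterns and their bump functions -/

/-- The order pattern of `Y`: triples `(m, i, j)` with `Y_i^m < Y_j^m`. -/
def pattern {N d : ℕ} (Y : Fin N → Fin d → ℝ) : Finset (Fin d × Fin N × Fin N) :=
  {a | Y a.2.1 a.1 < Y a.2.2 a.1}

lemma mem_pattern {N d : ℕ} (Y : Fin N → Fin d → ℝ) (m : Fin d) (i j : Fin N) :
    (m, i, j) ∈ pattern Y ↔ Y i m < Y j m := by simp [pattern]

/-- The signed coordinate difference `X_j^m - X_i^m` of the triple `a = (m, i, j)`. -/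
def diff {N d : ℕ} (X : Fin N → Fin d → ℝ) (a : Fin d × Fin N × Fin N) : ℝ :=
  X a.2.2 a.1 - X a.2.1 a.1

/-- A continuous function, positive exactly where every difference indexed by `R` exceeds every
difference indexed by the complement of `R`, and zero elsewhere. -/
def bump {N d : ℕ} (R : Finset (Fin d × Fin N × Fin N)) (X : Fin N → Fin d → ℝ) : ℝ :=
  ∏ a ∈ R, ∏ b ∈ Rᶜ, max 0 (diff X a - diff X b)

lemma continuous_bump {N d : ℕ} (R : Finset (Fin d × Fin N × Fin N)) :
    Continuous (bump R) := by
  unfold bump diff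
  fun_prop

lemma bump_nonneg {N d : ℕ} (R : Finset (Fin d × Fin N × Fin N)) (X : Fin N → Fin d → ℝ) :
    0 ≤ bump R X :=
  prod_nonneg fun _ _ => prod_nonneg fun _ _ => le_max_left _ _

lemma diff_lt_of_bump {N d : ℕ} {R : Finset (Fin d × Fin N × Fin N)} {X : Fin N → Fin d → ℝ}
    (h : bump R X ≠ 0) {a b : Fin d × Fin N × Fin N} (ha : a ∈ R) (hb : b ∉ R) :
    diff X b < diff X a := by
  unfold bump at h
  rw [prod_ne_zero_iff] at h
  have h1 := h a ha
  rw [prod_ne_zero_iff] at h1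
  have h2 := h1 b (by simpa using hb)
  by_contra hc
  exact h2 (max_eq_left (by linarith))

lemma bump_pattern_pos {N d : ℕ} (Y : Fin N → Fin d → ℝ) : 0 < bump (pattern Y) Y := by
  refine prod_pos fun a ha => prod_pos fun b hb => lt_max_of_lt_right ?_
  simp only [pattern, mem_compl, mem_filter, mem_univ, true_and, not_lt] at ha hb
  unfold diff
  linarith

/-! ### Dimension of an order pattern -/

/-- The linear span of the face of the arrangement of hyperplanes `Z_i^m = Z_j^m` that contains
`Y`: all the equalities between coordinates of `Y` are imposed. -/
def faceSpan {N d : ℕ} (Y : Fin N → Fin d → ℝ) : Submodule ℝ (Fin N → Fin d → ℝ) where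
  carrier := {Z | ∀ m i j, Y i m = Y j m → Z i m = Z j m}
  add_mem' := fun {a b} ha hb m i j h => by
    simp only [Pi.add_apply, ha m i j h, hb m i j h]
  zero_mem' := fun _ _ _ _ => rfl
  smul_mem' := fun c a ha m i j h => by
    simp only [Pi.smul_apply, ha m i j h]

lemma finrank_faceSpan_le {N d : ℕ} (Y : Fin N → Fin d → ℝ) :
    Module.finrank ℝ (faceSpan Y) ≤ d * N := by
  refine (Submodule.finrank_le _).trans (le_of_eq ?_)
  rw [Module.finrank_pi_fintype]
  simp [mul_comm]

lemma finrank_faceSpan_perm {N d : ℕ} (Y : Fin N → Fin d → ℝ) (σ : Equiv.Perm (Fin N)) :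
    Module.finrank ℝ (faceSpan fun i => Y (σ i)) = Module.finrank ℝ (faceSpan Y) := by
  let e : (Fin N → Fin d → ℝ) ≃ₗ[ℝ] (Fin N → Fin d → ℝ) :=
    LinearEquiv.funCongrLeft ℝ (Fin d → ℝ) σ
  have h : (faceSpan fun i => Y (σ i)) = (faceSpan Y).map (e : _ →ₗ[ℝ] _) := by
    ext Z
    constructor
    · intro hZ
      refine ⟨fun i => Z (σ.symm i), ?_, ?_⟩
      · intro m i j hij
        exact hZ m _ _ (by simpa using hij)
      · funext i
        simp [e, LinearEquiv.funCongrLeft_apply, LinearMap.funLeft_apply]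
    · rintro ⟨W, hW, rfl⟩ m i j hij
      exact hW m _ _ hij
  rw [h]
  exact LinearEquiv.finrank_map_eq e (faceSpan Y)

/-- A finer order pattern of the same dimension is the same pattern. -/
lemma pattern_eq_of_subset {N d : ℕ} {Y Y' : Fin N → Fin d → ℝ} (h : pattern Y ⊆ pattern Y')
    (hr : Module.finrank ℝ (faceSpan Y) = Module.finrank ℝ (faceSpan Y')) :
    pattern Y = pattern Y' := by
  have hsub : ∀ m i j, Y i m < Y j m → Y' i m < Y' j m := fun m i j hij =>
    (mem_pattern _ _ _ _).1 (h ((mem_pattern _ _ _ _).2 hij))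
  have hle : faceSpan Y ≤ faceSpan Y' := by
    intro Z hZ m i j hij
    refine hZ m i j (le_antisymm ?_ ?_)
    · exact not_lt.1 fun hc => (hsub _ _ _ hc).ne' hij
    · exact not_lt.1 fun hc => (hsub _ _ _ hc).ne hij
  have heq := Submodule.eq_of_le_of_finrank_eq hle hr
  have hmem : Y' ∈ faceSpan Y := by
    rw [heq]
    exact fun _ _ _ hij => hij
  refine subset_antisymm h ?_
  rintro ⟨m, i, j⟩ hij
  rw [mem_pattern] at hij ⊢
  rcases lt_trichotomy (Y i m) (Y j m) with h1 | h1 | h1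
  · exact h1
  · exact absurd (hmem m i j h1) hij.ne
  · exact absurd (hsub _ _ _ h1) hij.not_gt

lemma pattern_eq_of_bump {N d : ℕ} {Y Y' X : Fin N → Fin d → ℝ}
    (hr : Module.finrank ℝ (faceSpan Y) = Module.finrank ℝ (faceSpan Y'))
    (h : bump (pattern Y) X ≠ 0) (h' : bump (pattern Y') X ≠ 0) :
    pattern Y = pattern Y' := by
  by_cases hs : pattern Y ⊆ pattern Y'
  · exact pattern_eq_of_subset hs hr
  by_cases hs' : pattern Y' ⊆ pattern Y
  · exact (pattern_eq_of_subset hs' hr.symm).symm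
  obtain ⟨a, ha, ha'⟩ := Finset.not_subset.1 hs
  obtain ⟨b, hb, hb'⟩ := Finset.not_subset.1 hs'
  exact absurd (diff_lt_of_bump h ha hb') (diff_lt_of_bump h' hb ha').not_gt

lemma bump_pattern_perm {N d : ℕ} {Y X : Fin N → Fin d → ℝ} {σ : Equiv.Perm (Fin N)}
    (h : bump (pattern Y) (fun i => X (σ i)) ≠ 0) :
    bump (pattern fun i => Y (σ.symm i)) X ≠ 0 := by
  unfold bump
  rw [prod_ne_zero_iff]
  rintro ⟨m, i, j⟩ ha
  rw [prod_ne_zero_iff]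
  rintro ⟨m', i', j'⟩ hb
  rw [mem_compl, mem_pattern] at hb
  rw [mem_pattern] at ha
  have := diff_lt_of_bump h (a := (m, σ.symm i, σ.symm j)) (b := (m', σ.symm i', σ.symm j'))
    ((mem_pattern _ _ _ _).2 ha) (fun hc => hb ((mem_pattern _ _ _ _).1 hc))
  refine (lt_max_of_lt_right ?_).ne'
  simp only [diff, Equiv.apply_symm_apply] at this ⊢
  linarith

/-! ### Lexicographically increasing patterns of a given dimension -/

/-- The points of `Y` are strictly increasing in the lexicographic order of `ℝ^d`. -/
def LexIncr {N d : ℕ} (Y : Fin N → Fin d → ℝ) : Prop :=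
  StrictMono fun i => toLex (Y i)

lemma toLex_lt_of_pattern_eq {N d : ℕ} {Y Y' : Fin N → Fin d → ℝ} (h : pattern Y = pattern Y')
    {i j : Fin N} (hij : toLex (Y i) < toLex (Y j)) : toLex (Y' i) < toLex (Y' j) := by
  have hiff : ∀ m i j, Y i m < Y j m ↔ Y' i m < Y' j m := fun m i j => by
    rw [← mem_pattern, ← mem_pattern, h]
  obtain ⟨m, hm, hlt⟩ := hij
  refine ⟨m, fun l hl => ?_, (hiff m i j).1 hlt⟩
  have := hm l hl
  simp only [Pi.toLex_apply] at this ⊢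
  refine le_antisymm ?_ ?_
  · exact not_lt.1 fun hc => ((hiff l j i).2 hc).ne' this
  · exact not_lt.1 fun hc => ((hiff l i j).2 hc).ne this

open Classical in
/-- The sum of the bumps of all `k`-dimensional order patterns of lexicographically increasing
configurations. -/
def level {N d : ℕ} (k : ℕ) (X : Fin N → Fin d → ℝ) : ℝ :=
  ∑ R : Finset (Fin d × Fin N × Fin N),
    if ∃ Y : Fin N → Fin d → ℝ, LexIncr Y ∧ pattern Y = R ∧
      Module.finrank ℝ (faceSpan Y) = k then bump R X else 0

lemma continuous_level {N d : ℕ} (k : ℕ) :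
    Continuous (level k : (Fin N → Fin d → ℝ) → ℝ) := by
  unfold level
  refine continuous_finsetSum _ fun R _ => ?_
  split_ifs
  · exact continuous_bump R
  · exact continuous_const

lemma level_nonneg {N d : ℕ} (k : ℕ) (X : Fin N → Fin d → ℝ) : 0 ≤ level k X := by
  unfold level
  refine sum_nonneg fun R _ => ?_
  split_ifs
  · exact bump_nonneg R X
  · exact le_rfl

lemma exists_of_level {N d : ℕ} {k : ℕ} {X : Fin N → Fin d → ℝ} (h : level k X ≠ 0) :
    ∃ Y : Fin N → Fin d → ℝ, LexIncr Y ∧ Module.finrank ℝ (faceSpan Y) = k ∧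
      bump (pattern Y) X ≠ 0 := by
  obtain ⟨R, -, hR⟩ := exists_ne_zero_of_sum_ne_zero h
  split_ifs at hR with hY
  · obtain ⟨Y, h1, rfl, h3⟩ := hY
    exact ⟨Y, h1, h3, hR⟩
  · exact absurd rfl hR

lemma level_self_pos {N d : ℕ} {Y : Fin N → Fin d → ℝ} (hY : LexIncr Y) :
    0 < level (Module.finrank ℝ (faceSpan Y)) Y := by
  unfold level
  refine sum_pos' (fun R _ => ?_) ⟨pattern Y, mem_univ _, ?_⟩
  · split_ifs
    · exact bump_nonneg R Y
    · exact le_rfl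
  · rw [if_pos ⟨Y, hY, rfl, rfl⟩]
    exact bump_pattern_pos Y

/-- The support of `level k` is disjoint from its nontrivial permutation translates. -/
lemma eq_one_of_level {N d : ℕ} {k : ℕ} {X : Fin N → Fin d → ℝ} {σ : Equiv.Perm (Fin N)}
    (h : level k X ≠ 0) (h' : level k (fun i => X (σ i)) ≠ 0) : σ = 1 := by
  obtain ⟨Y, hY, hYk, hYX⟩ := exists_of_level h
  obtain ⟨Y', hY', hYk', hYX'⟩ := exists_of_level h'
  have hb := bump_pattern_perm hYX'
  have hp := pattern_eq_of_bump (by rw [hYk, finrank_faceSpan_perm Y' σ.symm, hYk']) hYX hb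
  -- `Y' ∘ σ⁻¹` shares the pattern of `Y`, so it is increasing along with `Y'`.
  have hinc : StrictMono σ.symm := by
    intro i j hij
    have := toLex_lt_of_pattern_eq hp (hY hij)
    exact hY'.lt_iff_lt.1 this
  have hid : (hinc.orderIsoOfSurjective _ σ.symm.surjective) = OrderIso.refl _ :=
    Subsingleton.elim _ _
  ext i
  have := DFunLike.congr_fun hid (σ i)
  simp at this
  simp [← this]

/-! ### Determinants of scaled permutation matrices -/

/-- A continuous `N`-th root, odd for `i = 0` and even for the other `i`, so that the product over
`i` of all `root N i t` is `t`. -/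
def root (N : ℕ) (i : Fin N) (t : ℝ) : ℝ :=
  if (i : ℕ) = 0 then SignType.sign t * |t| ^ (1 / N : ℝ) else |t| ^ (1 / N : ℝ)

lemma root_zero {N : ℕ} (i : Fin N) : root N i 0 = 0 := by
  have hN : (N : ℝ) ≠ 0 := by
    have := i.pos
    positivity
  unfold root
  split_ifs
  · simp
  · simp [Real.zero_rpow, hN]

lemma continuous_root {N : ℕ} (i : Fin N) : Continuous (root N i) := by
  have hN : (0 : ℝ) < 1 / N := by
    have := i.pos
    positivity
  have habs : Continuous fun t : ℝ => |t| ^ (1 / N : ℝ) :=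
    continuous_abs.rpow_const fun _ => Or.inr hN.le
  by_cases hi : (i : ℕ) = 0
  · have : root N i = fun t : ℝ => SignType.sign t * |t| ^ (1 / N : ℝ) := by
      funext t
      simp [root, hi]
    -- The signed root is the difference of the roots of `max t 0` and `max (-t) 0`.
    have h2 : root N i = fun t : ℝ => (max t 0) ^ (1 / N : ℝ) - (max (-t) 0) ^ (1 / N : ℝ) := by
      rw [this]
      funext t
      have h0 : (0 : ℝ) ^ (1 / N : ℝ) = 0 := Real.zero_rpow hN.ne'
      rcases lt_trichotomy t 0 with h | h | h
      · rw [max_eq_right h.le, max_eq_left (by linarith), abs_of_neg h, h0, sign_neg h]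
        simp
      · subst h
        simp
      · rw [max_eq_left h.le, max_eq_right (by linarith), abs_of_pos h, h0, sign_pos h]
        simp
    rw [h2]
    refine Continuous.sub ?_ ?_
    · exact (continuous_id.max continuous_const).rpow_const fun _ => Or.inr hN.le
    · exact (continuous_neg.max continuous_const).rpow_const fun _ => Or.inr hN.le
  · have : root N i = fun t : ℝ => |t| ^ (1 / N : ℝ) := by
      funext t
      simp [root, hi]
    rw [this]
    exact habs

lemma prod_root {N : ℕ} (hN : 0 < N) (t : ℝ) : ∏ i : Fin N, root N i t = t := by
  have h : ∀ i : Fin N, root N i t =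
      (if i = ⟨0, hN⟩ then (SignType.sign t : ℝ) else 1) * |t| ^ (1 / N : ℝ) := by
    intro i
    unfold root
    by_cases hi : (i : ℕ) = 0
    · rw [if_pos hi, if_pos (Fin.ext hi)]
    · rw [if_neg hi, if_neg (fun hc => hi (congrArg Fin.val hc)), one_mul]
  rw [prod_congr rfl fun i _ => h i, prod_mul_distrib, prod_ite_eq' univ]
  have : (|t| ^ (1 / N : ℝ)) ^ N = |t| := by
    rw [one_div]
    exact Real.rpow_inv_natCast_pow (abs_nonneg t) hN.ne'
  simp only [mem_univ, if_true, prod_const, card_univ, Fintype.card_fin, this]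
  exact sign_mul_abs t

/-- The entries of the generalized Slater determinant attached to `f`. -/
def slater {N d : ℕ} (f : (Fin N → Fin d → ℝ) → ℝ) (i : Fin N) (X : Fin N → Fin d → ℝ)
    (j : Fin N) : ℝ :=
  ∑ σ : Equiv.Perm (Fin N), if σ i = j then root N i (f fun l => X (σ l)) else 0

lemma slater_perm {N d : ℕ} (f : (Fin N → Fin d → ℝ) → ℝ) (i j : Fin N)
    (π : Equiv.Perm (Fin N)) (hπ : π j = j) (X : Fin N → Fin d → ℝ) :
    slater f i (fun m => X (π m)) j = slater f i X j := by
  unfold slater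
  refine Fintype.sum_equiv (Equiv.mulLeft π) _ _ fun σ => ?_
  have : π (σ i) = j ↔ σ i = j := by
    conv_lhs => rw [← hπ]
    exact π.injective.eq_iff
  simp [this]

lemma det_slater {N d : ℕ} (hN : 0 < N) (f : (Fin N → Fin d → ℝ) → ℝ)
    (X : Fin N → Fin d → ℝ)
    (hf : ∀ σ τ : Equiv.Perm (Fin N), f (fun l => X (σ l)) ≠ 0 → f (fun l => X (τ l)) ≠ 0 →
      σ = τ) :
    Matrix.det (Matrix.of fun j i : Fin N => slater f i X j) =
      ∑ σ : Equiv.Perm (Fin N), ((Equiv.Perm.sign σ : ℤ) : ℝ) * f fun l => X (σ l) := by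
  by_cases h : ∃ σ : Equiv.Perm (Fin N), f (fun l => X (σ l)) ≠ 0
  · obtain ⟨σ, hσ⟩ := h
    have hz : ∀ τ, τ ≠ σ → f (fun l => X (τ l)) = 0 := fun τ hτ => by
      by_contra hc
      exact hτ (hf _ _ hc hσ)
    rw [sum_eq_single σ (fun τ _ hτ => by rw [hz τ hτ, mul_zero]) (by simp)]
    have hs : ∀ i j, slater f i X j = if σ i = j then root N i (f fun l => X (σ l)) else 0 := by
      intro i j
      unfold slater
      refine sum_eq_single σ (fun τ _ hτ => ?_) (by simp)
      rw [hz τ hτ, root_zero, ite_self]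
    rw [Matrix.det_apply', sum_eq_single σ]
    · simp only [Matrix.of_apply, hs, if_true]
      rw [prod_root hN]
    · intro τ _ hτ
      obtain ⟨i, hi⟩ : ∃ i, τ i ≠ σ i := by
        by_contra! hc
        exact hτ (Equiv.ext hc)
      rw [prod_eq_zero (mem_univ i), mul_zero]
      rw [Matrix.of_apply, hs, if_neg hi.symm]
    · simp
  · push Not at h
    have hM : (Matrix.of fun j i : Fin N => slater f i X j) = 0 := by
      ext j i
      simp [slater, h, root_zero]
    have : Nonempty (Fin N) := ⟨⟨0, hN⟩⟩
    rw [hM, Matrix.det_zero]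
    simp [h]

/-! ### Splitting an anti-symmetric function -/

/-- The symmetrization of the sum of the functions `level k` over all dimensions `k`. -/
def total {N d : ℕ} (X : Fin N → Fin d → ℝ) : ℝ :=
  ∑ k : Fin (d * N + 1), ∑ σ : Equiv.Perm (Fin N), level (k : ℕ) fun l => X (σ l)

lemma continuous_total {N d : ℕ} : Continuous (total : (Fin N → Fin d → ℝ) → ℝ) := by
  unfold total
  refine continuous_finsetSum _ fun k _ => continuous_finsetSum _ fun σ _ => ?_
  exact (continuous_level k).comp (by fun_prop)

lemma total_perm {N d : ℕ} (X : Fin N → Fin d → ℝ) (π : Equiv.Perm (Fin N)) :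
    total (fun l => X (π l)) = total X := by
  unfold total
  refine sum_congr rfl fun k _ => ?_
  exact Fintype.sum_equiv (Equiv.mulLeft π) _ _ fun σ => by simp

lemma level_le_total {N d : ℕ} (X : Fin N → Fin d → ℝ) (k : Fin (d * N + 1))
    (σ : Equiv.Perm (Fin N)) : level (k : ℕ) (fun l => X (σ l)) ≤ total X := by
  refine le_trans ?_ (single_le_sum (f := fun k : Fin (d * N + 1) =>
    ∑ σ : Equiv.Perm (Fin N), level (k : ℕ) fun l => X (σ l))
    (fun k _ => sum_nonneg fun σ _ => level_nonneg _ _) (mem_univ k))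
  exact single_le_sum (f := fun σ : Equiv.Perm (Fin N) => level (k : ℕ) fun l => X (σ l))
    (fun σ _ => level_nonneg _ _) (mem_univ σ)

lemma total_pos {N d : ℕ} {X : Fin N → Fin d → ℝ} (hX : Function.Injective X) :
    0 < total X := by
  let σ := Tuple.sort fun i => toLex (X i)
  have hm : LexIncr fun i => X (σ i) :=
    (Tuple.monotone_sort fun i => toLex (X i)).strictMono_of_injective
      (toLex.injective.comp (hX.comp σ.injective))
  exact (level_self_pos hm).trans_le (level_le_total X
    ⟨_, Nat.lt_succ_of_le (finrank_faceSpan_le fun i => X (σ i))⟩ σ)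

lemma eq_zero_of_total {N d : ℕ} {Ψ : (Fin N → Fin d → ℝ) → ℝ} (hΨ : IsAntisym N d Ψ)
    {X : Fin N → Fin d → ℝ} (hX : total X = 0) : Ψ X = 0 := by
  have : ¬ Function.Injective X := fun h => (total_pos h).ne' hX
  simp only [Function.Injective, not_forall] at this
  obtain ⟨i, j, hij, hne⟩ := this
  have h := hΨ (Equiv.swap i j) X
  have hs : (fun l => X (Equiv.swap i j l)) = X := by
    funext l
    by_cases h1 : l = i
    · subst h1
      simp [hij]
    by_cases h2 : l = j
    · subst h2
      simp [hij]
    rw [Equiv.swap_apply_of_ne_of_ne h1 h2]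
  rw [hs, Equiv.Perm.sign_swap hne] at h
  simp at h
  linarith

/-- The `k`-th piece of `Ψ`. Where `total` vanishes the quotient is `0`, and so is `Ψ` itself. -/
def piece {N d : ℕ} (Ψ : (Fin N → Fin d → ℝ) → ℝ) (k : Fin (d * N + 1))
    (X : Fin N → Fin d → ℝ) : ℝ :=
  Ψ X * (level (k : ℕ) X / total X)

lemma continuous_piece {N d : ℕ} {Ψ : (Fin N → Fin d → ℝ) → ℝ} (hc : Continuous Ψ)
    (hΨ : IsAntisym N d Ψ) (k : Fin (d * N + 1)) : Continuous (piece Ψ k) := by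
  rw [continuous_iff_continuousAt]
  intro X
  by_cases hX : total X = 0
  · have h0 : Ψ X = 0 := eq_zero_of_total hΨ hX
    have hp : piece Ψ k X = 0 := by simp [piece, h0]
    rw [ContinuousAt, hp]
    refine squeeze_zero_norm (a := fun Z => |Ψ Z|) (fun Z => ?_) ?_
    · have hle : level (k : ℕ) Z ≤ total Z := level_le_total Z k 1
      have hl := level_nonneg (k : ℕ) Z
      rw [piece, norm_mul, Real.norm_eq_abs, Real.norm_eq_abs,
        abs_of_nonneg (div_nonneg hl (hl.trans hle))]
      exact mul_le_of_le_one_right (abs_nonneg _) (div_le_one_of_le₀ hle (hl.trans hle))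
    · have := (hc.abs).tendsto X
      simpa [h0] using this
  · exact hc.continuousAt.mul
      ((continuous_level _).continuousAt.div continuous_total.continuousAt hX)

theorem stmt_4 (N d : ℕ) (hN : 2 ≤ N) (hd : 1 ≤ d) (K : ℕ) (hK : K = d * N + 1)
    (Ψ : (Fin N → Fin d → ℝ) → ℝ) (hΨcont : Continuous Ψ) (hΨanti : IsAntisym N d Ψ) :
    ∃ h : Fin K → Fin N → (Fin N → Fin d → ℝ) → Fin N → ℝ,
      -- (a) each entry is continuous in `X`
      (∀ k i j, Continuous (fun X => h k i X j)) ∧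
      -- (b) each entry, as a function of `X`, is symmetric in the coordinates `X_l`, `l ≠ j`
      (∀ k i j (π : Equiv.Perm (Fin N)), π j = j →
        ∀ X : Fin N → Fin d → ℝ, h k i (fun m => X (π m)) j = h k i X j) ∧
      -- (c) `Ψ` is the sum of the `K` generalized Slater determinants
      (∀ X : Fin N → Fin d → ℝ,
        Ψ X = ∑ k : Fin K, Matrix.det (Matrix.of fun j i : Fin N => h k i X j)) := by
  subst hK
  refine ⟨fun k => slater (piece Ψ k), fun k i j => ?_, fun k i j π hπ X =>
    slater_perm _ i j π hπ X, fun X => ?_⟩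
  · refine continuous_finsetSum _ fun σ _ => ?_
    split_ifs
    · exact (continuous_root i).comp
        ((continuous_piece hΨcont hΨanti k).comp (by fun_prop))
    · exact continuous_const
  · have hdet : ∀ k, Matrix.det (Matrix.of fun j i : Fin N => slater (piece Ψ k) i X j) =
        ∑ σ : Equiv.Perm (Fin N), Ψ X * (level (k : ℕ) (fun l => X (σ l)) / total X) := by
      intro k
      rw [det_slater (by omega)]
      · refine sum_congr rfl fun σ _ => ?_
        have hsq : ((Equiv.Perm.sign σ : ℤ) : ℝ) * ((Equiv.Perm.sign σ : ℤ) : ℝ) = 1 := by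
          rcases Int.units_eq_one_or (Equiv.Perm.sign σ) with h | h <;> simp [h]
        rw [piece, hΨanti, total_perm, ← mul_assoc, ← mul_assoc, hsq, one_mul]
      · intro σ τ hσ hτ
        have h1 := (div_ne_zero_iff.1 (right_ne_zero_of_mul hσ)).1
        have h2 := (div_ne_zero_iff.1 (right_ne_zero_of_mul hτ)).1
        have := eq_one_of_level (σ := σ⁻¹ * τ) h1 (by simpa using h2)
        exact inv_mul_eq_one.1 this
    simp only [hdet, ← mul_sum, ← sum_div]
    change Ψ X = Ψ X * (total X / total X)
    by_cases hX : total X = 0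
    · rw [eq_zero_of_total hΨanti hX, zero_mul]
    · rw [div_self hX, mul_one]
end
end
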